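/- Let B = diag(b₁,...,bₙ) and κ ∈ ℝ. Suppose X, P : ℝ → M_{n,r}(ℝ) are differentiable curves which at time t satisfy XᵀX = I_r, XᵀP = 0 and PᵀX = 0, together with X' = P - (1+2κ)XPᵀX. Then the curve M = (I_n - 2XXᵀ)B(I_n - 2XXᵀ) satisfies, at time t, dM/dt = 2[Φ, M], where Φ = PXᵀ - XPᵀ. -/

import Mathlib

open Matrix

/-- Entrywise derivative of a matrix-valued curve. -/
def HasMatDerivAt {m k : Type*} {E : Type*} [NormedAddCommGroup E] [NormedSpace ℝ E]
    (F : ℝ → Matrix m k E) (F' : Matrix m k E) (t : ℝ) : Prop :=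
  ∀ i j, HasDerivAt (fun s => F s i j) (F' i j) t

/-!
`S = 1 - 2XXᵀ` is the orthogonal reflection that is `-1` on the range of `X` and `1` on its
complement. The condition `XᵀP = 0` makes `Φ = PXᵀ - XPᵀ` off-diagonal with respect to this
splitting, so `Φ` anticommutes with `S`. It also reduces the equation of motion to `X' = P`, which
gives `S' = [Φ, S]`. In the Leibniz rule for `(SBS)'` anticommutation turns each of the two terms
containing `Φ` between `S` and `B` into another copy of an outer one, whence the factor `2`.
-/

theorem lie_mul_mul_add_mul_mul_lie_of_anticomm {R : Type*} [NonUnitalRing R] {a s : R}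
    (h : a * s = -(s * a)) (b : R) :
    ⁅a, s⁆ * b * s + s * b * ⁅a, s⁆ = 2 • ⁅a, s * b * s⁆ := by
  have left : ⁅a, s⁆ = 2 • (a * s) := by
    rw [Ring.lie_def, h]
    abel
  have right : ⁅a, s⁆ = -(2 • (s * a)) := by rw [left, h, smul_neg]
  calc ⁅a, s⁆ * b * s + s * b * ⁅a, s⁆
      = 2 • (a * s) * b * s + s * b * -(2 • (s * a)) := by rw [← left, ← right]
    _ = 2 • ⁅a, s * b * s⁆ := by
      rw [Ring.lie_def]
      noncomm_ring

namespace HasMatDerivAt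

theorem transpose {m k E : Type*} [NormedAddCommGroup E] [NormedSpace ℝ E]
    {F : ℝ → Matrix m k E} {F' : Matrix m k E} {t : ℝ} (hF : HasMatDerivAt F F' t) :
    HasMatDerivAt (fun s => (F s)ᵀ) F'ᵀ t :=
  fun i j => hF j i

variable {l m k 𝔸 : Type*} [NormedRing 𝔸] [NormedAlgebra ℝ 𝔸] {t : ℝ}

protected theorem mul [Fintype m] {F : ℝ → Matrix l m 𝔸} {G : ℝ → Matrix m k 𝔸}
    {F' : Matrix l m 𝔸} {G' : Matrix m k 𝔸}
    (hF : HasMatDerivAt F F' t) (hG : HasMatDerivAt G G' t) :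
    HasMatDerivAt (fun s => F s * G s) (F' * G t + F t * G') t := by
  intro i j
  simp only [Matrix.mul_apply, Matrix.add_apply, ← Finset.sum_add_distrib]
  exact HasDerivAt.fun_sum fun a _ => (hF i a).mul (hG a j)

theorem mul_const [Fintype m] {F : ℝ → Matrix l m 𝔸} {F' : Matrix l m 𝔸}
    (hF : HasMatDerivAt F F' t) (B : Matrix m k 𝔸) :
    HasMatDerivAt (fun s => F s * B) (F' * B) t :=
  fun i j => HasDerivAt.fun_sum fun a _ => (hF i a).mul_const (B a j)

theorem mul_mul_self_of_anticomm [Fintype m] {S : ℝ → Matrix m m 𝔸}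
    {Φ : Matrix m m 𝔸} (hS : HasMatDerivAt S ⁅Φ, S t⁆ t) (hΦ : Φ * S t = -(S t * Φ))
    (B : Matrix m m 𝔸) :
    HasMatDerivAt (fun s => S s * B * S s) ((2 : ℝ) • ⁅Φ, S t * B * S t⁆) t := by
  rw [ofNat_smul_eq_nsmul ℝ 2, ← lie_mul_mul_add_mul_mul_lie_of_anticomm hΦ]
  exact (hS.mul_const B).mul hS

end HasMatDerivAt

section Reflection

variable {m k 𝔸 : Type*} [DecidableEq m] [Fintype k]

/-- The matrix `1 - 2XY`. If `YX = 1`, it is the reflection equal to `-1` on the range of `X` and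
to `1` on the kernel of `Y`. Keeping `Y` independent of `X` covers both `Y = Xᵀ` and `Y = Xᴴ`. -/
def reflectionMatrix [Ring 𝔸] [Module ℝ 𝔸] (X : Matrix m k 𝔸) (Y : Matrix k m 𝔸) :
    Matrix m m 𝔸 :=
  1 - (2 : ℝ) • (X * Y)

theorem HasMatDerivAt.reflectionMatrix [NormedRing 𝔸] [NormedAlgebra ℝ 𝔸]
    {X : ℝ → Matrix m k 𝔸} {Y : ℝ → Matrix k m 𝔸} {X' : Matrix m k 𝔸} {Y' : Matrix k m 𝔸} {t : ℝ}
    (hX : HasMatDerivAt X X' t) (hY : HasMatDerivAt Y Y' t) :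
    HasMatDerivAt (fun s => reflectionMatrix (X s) (Y s))
      (-((2 : ℝ) • (X' * Y t + X t * Y'))) t :=
  fun i j => ((hX.mul hY i j).const_smul (2 : ℝ)).const_sub ((1 : Matrix m m 𝔸) i j)

variable [Fintype m] [DecidableEq k] [Ring 𝔸] [Algebra ℝ 𝔸]
  {X P : Matrix m k 𝔸} {Y Q : Matrix k m 𝔸}

theorem sub_mul_reflectionMatrix (hYX : Y * X = 1) (hQX : Q * X = 0) :
    (P * Y - X * Q) * reflectionMatrix X Y = -(P * Y + X * Q) := by
  have hPY : P * Y * (X * Y) = P * Y := by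
    rw [Matrix.mul_assoc, ← Matrix.mul_assoc Y, hYX, Matrix.one_mul]
  have hXQ : X * Q * (X * Y) = 0 := by
    rw [Matrix.mul_assoc, ← Matrix.mul_assoc Q, hQX, Matrix.zero_mul, Matrix.mul_zero]
  rw [reflectionMatrix, Matrix.mul_sub, Matrix.mul_one, Matrix.mul_smul, Matrix.sub_mul, hPY, hXQ]
  module

theorem reflectionMatrix_mul_sub (hYX : Y * X = 1) (hYP : Y * P = 0) :
    reflectionMatrix X Y * (P * Y - X * Q) = P * Y + X * Q := by
  have hPY : X * Y * (P * Y) = 0 := by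
    rw [Matrix.mul_assoc, ← Matrix.mul_assoc Y, hYP, Matrix.zero_mul, Matrix.mul_zero]
  have hXQ : X * Y * (X * Q) = X * Q := by
    rw [Matrix.mul_assoc, ← Matrix.mul_assoc Y, hYX, Matrix.one_mul]
  rw [reflectionMatrix, Matrix.sub_mul, Matrix.one_mul, Matrix.smul_mul, Matrix.mul_sub, hPY, hXQ]
  module

theorem lie_sub_reflectionMatrix (hYX : Y * X = 1) (hYP : Y * P = 0) (hQX : Q * X = 0) :
    ⁅P * Y - X * Q, reflectionMatrix X Y⁆ = -((2 : ℝ) • (P * Y + X * Q)) := by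
  rw [Ring.lie_def, sub_mul_reflectionMatrix hYX hQX, reflectionMatrix_mul_sub hYX hYP]
  module

end Reflection

theorem fourth_degree_M_evolution_general {m k 𝔸 : Type*} [Fintype m] [DecidableEq m]
    [Fintype k] [DecidableEq k] [NormedRing 𝔸] [NormedAlgebra ℝ 𝔸] (B : Matrix m m 𝔸)
    {X : ℝ → Matrix m k 𝔸} {Y : ℝ → Matrix k m 𝔸} {P : Matrix m k 𝔸} {Q : Matrix k m 𝔸} {t : ℝ}
    (hX : HasMatDerivAt X P t) (hY : HasMatDerivAt Y Q t)
    (hYX : Y t * X t = 1) (hYP : Y t * P = 0) (hQX : Q * X t = 0) :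
    HasMatDerivAt
      (fun s => reflectionMatrix (X s) (Y s) * B * reflectionMatrix (X s) (Y s))
      ((2 : ℝ) • ⁅P * Y t - X t * Q,
        reflectionMatrix (X t) (Y t) * B * reflectionMatrix (X t) (Y t)⁆) t := by
  have hS : HasMatDerivAt (fun s => reflectionMatrix (X s) (Y s))
      ⁅P * Y t - X t * Q, reflectionMatrix (X t) (Y t)⁆ t := by
    rw [lie_sub_reflectionMatrix hYX hYP hQX]
    exact hX.reflectionMatrix hY
  refine hS.mul_mul_self_of_anticomm ?_ B
  rw [sub_mul_reflectionMatrix hYX hQX, reflectionMatrix_mul_sub hYX hYP]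

/-- On the invariant set `XᵀP = PᵀX = 0`, with
`X' = P - (1+2κ)XPᵀX`, the curve `M = (I - 2XXᵀ)B(I - 2XXᵀ)` satisfies
`dM/dt = 2[Φ, M]`, where `Φ = PXᵀ - XPᵀ`. -/
theorem fourth_degree_M_evolution (n r : ℕ)
    (b : Fin n → ℝ) (B : Matrix (Fin n) (Fin n) ℝ) (hB : B = diagonal b) (κ : ℝ)
    (X P : ℝ → Matrix (Fin n) (Fin r) ℝ)
    (X' : Matrix (Fin n) (Fin r) ℝ) (t : ℝ)
    (hX : HasMatDerivAt X X' t)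
    (hc1 : (X t)ᵀ * X t = 1)
    (hc2 : (X t)ᵀ * P t = 0) (hc3 : (P t)ᵀ * X t = 0)
    (heqX : X' = P t - (1 + 2 * κ) • (X t * ((P t)ᵀ * X t))) :
    HasMatDerivAt
      (fun s => (1 - (2 : ℝ) • (X s * (X s)ᵀ)) * B * (1 - (2 : ℝ) • (X s * (X s)ᵀ)))
      ((2 : ℝ) •
        ((P t * (X t)ᵀ - X t * (P t)ᵀ)
            * ((1 - (2 : ℝ) • (X t * (X t)ᵀ)) * B * (1 - (2 : ℝ) • (X t * (X t)ᵀ)))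
          - ((1 - (2 : ℝ) • (X t * (X t)ᵀ)) * B * (1 - (2 : ℝ) • (X t * (X t)ᵀ)))
            * (P t * (X t)ᵀ - X t * (P t)ᵀ))) t := by
  have hXP : HasMatDerivAt X (P t) t := by
    simpa only [heqX, hc3, Matrix.mul_zero, smul_zero, sub_zero] using hX
  exact fourth_degree_M_evolution_general B hXP hXP.transpose hc1 hc2 hc3
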